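/- Let R be a commutative ring, r ≥ 1, λ_1,…,λ_r ∈ R and n_1,…,n_r positive integers with N = n_1+⋯+n_r. Write p(s) = ∏_{k=1}^r (s−λ_k)^{n_k} = s^N + Σ_{j=0}^{N−1} a_j s^j. Let F be the N×N companion-form matrix with F_{i,i+1} = 1 for i = 0,…,N−2, F_{N−1,j} = −a_j for j = 0,…,N−1, and all other entries 0. Let J be the N×N block-diagonal matrix whose k-th diagonal block is the Jordan block J(λ_k, n_k). Let V be the associated confluent Vandermonde matrix. Then F·V = V·J. -/

import Mathlib

open Finset Polynomial

/-!
For `f : R[X]`, the Taylor coefficient `(taylor (lam k) f).coeff j` is the value at `lam k` of the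
`j`-th Hasse derivative of `f`, and the `(k, j)` column of `V` lists these numbers for
`f = 1, X, …, X ^ (N - 1)` (`coeff_taylor_X_pow`). On both sides of the identity, the entry in
row `i` and column `(k, j)` is the Taylor coefficient of `X ^ (i + 1)`.

* Multiplying by the Jordan block on the right is Leibniz' rule for `X * X ^ i`, since
  `taylor a X = X + C a` (`coeff_taylor_X_mul_zero`, `coeff_taylor_X_mul_succ`).
* Row `i` of the companion matrix holds the coefficients of `X ^ (i + 1)` if `i < N - 1`, and of
  `X ^ N - p` if `i = N - 1`. The extra `p` is not seen: `(X - C (lam k)) ^ n k` divides `p`, so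
  the Taylor coefficients of `p` at `lam k` of order less than `n k` vanish
  (`coeff_taylor_eq_zero_of_dvd`).
-/

theorem coeff_taylor_X_pow {R : Type*} [CommRing R] (a : R) (i j : ℕ) :
    (taylor a (X ^ i)).coeff j = (Nat.choose i j : R) * a ^ (i - j) := by
  rw [taylor_X_pow, coeff_X_add_C_pow, mul_comm]

theorem coeff_taylor_X_mul_zero {R : Type*} [CommRing R] (a : R) (f : R[X]) :
    (taylor a (X * f)).coeff 0 = a * (taylor a f).coeff 0 := by
  simp [taylor_mul, add_mul]

theorem coeff_taylor_X_mul_succ {R : Type*} [CommRing R] (a : R) (f : R[X]) (j : ℕ) :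
    (taylor a (X * f)).coeff (j + 1) =
      a * (taylor a f).coeff (j + 1) + (taylor a f).coeff j := by
  rw [taylor_mul, taylor_X, add_mul, coeff_add, coeff_X_mul, coeff_C_mul, add_comm]

theorem coeff_taylor_eq_zero_of_dvd {R : Type*} [CommRing R] {a : R} {m j : ℕ} {p : R[X]}
    (h : (X - C a) ^ m ∣ p) (hj : j < m) : (taylor a p).coeff j = 0 := by
  obtain ⟨g, rfl⟩ := h
  have h1 : taylor a ((X - C a) ^ m * g) = X ^ m * taylor a g := by
    simp [taylor_mul, taylor_pow]
  rw [h1, coeff_X_pow_mul', if_neg (by omega)]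

/-- A row of coefficients times a column of Taylor coefficients of `1, X, …, X ^ (N - 1)` is a
Taylor coefficient of the polynomial with those coefficients: this makes each entry of `F * V` a
Taylor coefficient of the polynomial that a row of `F` encodes. -/
theorem sum_mul_coeff_taylor {R : Type*} [CommRing R] {N : ℕ} (c : Fin N → R) (a : R) (j : ℕ) :
    ∑ m : Fin N, c m * (taylor a (X ^ (m : ℕ))).coeff j =
      (taylor a (∑ m : Fin N, C (c m) * X ^ (m : ℕ))).coeff j := by
  simp only [map_sum, finsetSum_coeff, taylor_mul, taylor_C, coeff_C_mul]

/-- **Similarity of the companion form and the Jordan form via the confluent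
Vandermonde matrix.**  Let `p = ∏ (X - λ k) ^ (n k) = X^N + ∑ a j X^j`, let `F`
be the companion-form matrix of `p` (ones on the superdiagonal and `-a j` in
the last row), let `J` be the block-diagonal matrix of Jordan blocks
`J(λ k, n k)` (blocks encoded via the equivalence `e`), and let `V` be the
confluent Vandermonde matrix.  Then `F * V = V * J`. -/
theorem companion_mul_confluent_vandermonde
    (R : Type*) [CommRing R] (r : ℕ) (hr : 1 ≤ r)
    (lam : Fin r → R) (n : Fin r → ℕ) (hn : ∀ k, 0 < n k)
    (e : (Σ k : Fin r, Fin (n k)) ≃ Fin (∑ u, n u))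
    (he : ∀ q : Σ k : Fin r, Fin (n k),
      (e q : ℕ) = (∑ i ∈ univ.filter (fun i => i < q.1), n i) + (q.2 : ℕ))
    (p : Polynomial R) (hp : p = ∏ k : Fin r, (X - C (lam k)) ^ (n k))
    (F : Matrix (Fin (∑ u, n u)) (Fin (∑ u, n u)) R)
    (hF : ∀ i j : Fin (∑ u, n u),
      F i j = if (i : ℕ) + 1 = (j : ℕ) then 1
        else if (i : ℕ) = (∑ u, n u) - 1 then -(p.coeff (j : ℕ)) else 0)
    (J : Matrix (Fin (∑ u, n u)) (Fin (∑ u, n u)) R)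
    (hJ : ∀ q q' : Σ k : Fin r, Fin (n k),
      J (e q) (e q') =
        if q.1 = q'.1 ∧ (q.2 : ℕ) = (q'.2 : ℕ) then lam q.1
        else if q.1 = q'.1 ∧ (q.2 : ℕ) + 1 = (q'.2 : ℕ) then 1 else 0)
    (V : Matrix (Fin (∑ u, n u)) (Fin (∑ u, n u)) R)
    (hV : ∀ (i : Fin (∑ u, n u)) (q : Σ k : Fin r, Fin (n k)),
      V i (e q) = (Nat.choose (i : ℕ) (q.2 : ℕ) : R) * lam q.1 ^ ((i : ℕ) - (q.2 : ℕ))) :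
    F * V = V * J := by
  -- Over the zero ring `p` has degree `0`, so `hdeg` below needs `R` to be nontrivial.
  nontriviality R
  have hmonic : p.Monic := hp ▸ monic_prod_of_monic _ _ fun k _ => (monic_X_sub_C _).pow _
  have hdeg : p.natDegree = ∑ u, n u := by
    rw [hp, natDegree_prod_of_monic _ _ fun k _ => (monic_X_sub_C _).pow _]
    exact sum_congr rfl fun k _ => by
      rw [(monic_X_sub_C _).natDegree_pow, natDegree_X_sub_C, mul_one]
  have hV' : ∀ i q, V i (e q) = (taylor (lam q.1) (X ^ (i : ℕ))).coeff (q.2 : ℕ) := fun i q => by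
    rw [hV, coeff_taylor_X_pow]
  ext i c
  obtain ⟨q, rfl⟩ := e.surjective c
  -- Both sides are compared with the Taylor coefficient of `X ^ (i + 1)`.
  trans (taylor (lam q.1) (X * X ^ (i : ℕ))).coeff (q.2 : ℕ)
  · rw [Matrix.mul_apply]
    simp only [hV']
    rw [sum_mul_coeff_taylor, ← pow_succ']
    by_cases hi : (i : ℕ) + 1 < ∑ u, n u
    · congr 2
      rw [sum_eq_single ⟨(i : ℕ) + 1, hi⟩]
      · simp [hF]
      · intro m _ hm
        have h1 : ¬ (i : ℕ) + 1 = m := fun h => hm (Fin.ext h.symm)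
        rw [hF, if_neg h1, if_neg (by omega), C_0, zero_mul]
      · simp
    · have hiN : (i : ℕ) + 1 = ∑ u, n u := by omega
      have hrow : ∑ m, C (F i m) * X ^ (m : ℕ) = X ^ ((i : ℕ) + 1) - p := by
        have hsum := hmonic.as_sum
        rw [hdeg, sum_range] at hsum
        conv_rhs => rw [hsum, hiN, sub_add_cancel_left]
        rw [← sum_neg_distrib]
        refine sum_congr rfl fun m _ => ?_
        have h1 : ¬ (i : ℕ) + 1 = m := by omega
        rw [hF, if_neg h1, if_pos (by omega), C_neg, neg_mul]
      have hdvd : (X - C (lam q.1)) ^ n q.1 ∣ p :=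
        hp ▸ dvd_prod_of_mem (fun k => (X - C (lam k)) ^ n k) (mem_univ q.1)
      rw [hrow, map_sub, coeff_sub, coeff_taylor_eq_zero_of_dvd hdvd q.2.isLt, sub_zero]
  · rw [Matrix.mul_apply, ← e.sum_comp]
    simp only [hV', hJ]
    obtain ⟨k, j, hj⟩ := q
    generalize (X : R[X]) ^ (i : ℕ) = f
    -- Only rows of the same Jordan block contribute: the diagonal one and the one above it.
    rw [Fintype.sum_sigma, sum_eq_single k]
    · cases j with
      | zero =>
        rw [sum_eq_single ⟨0, hj⟩]
        · rw [coeff_taylor_X_mul_zero]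
          simp [mul_comm]
        · intro b _ hb
          have h1 : ¬ (b : ℕ) = 0 := fun h => hb (Fin.ext h)
          simp [h1]
        · simp
      | succ j =>
        rw [sum_eq_add ⟨j + 1, hj⟩ ⟨j, by omega⟩]
        · rw [coeff_taylor_X_mul_succ]
          simp [mul_comm]
        · simp
        · intro b _ hb
          have h1 : ¬ (b : ℕ) = j + 1 := fun h => hb.1 (Fin.ext h)
          have h2 : ¬ (b : ℕ) = j := fun h => hb.2 (Fin.ext h)
          simp [h1, h2]
        · simp
        · simp
    · intro k' _ hk
      exact sum_eq_zero fun b _ => by simp [hk]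
    · simp
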